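/- There is a bijection between set partitions of {1, ..., 2k} and pairs (P, Q) of vacillating tableaux of the same shape λ and length 2k, where λ ranges over all partitions of size at most k. -/

import Mathlib

/-- A vacillating tableau of length `2k` (Γ_k indexing): a sequence of Young diagrams
starting at the empty diagram, where at each half-step at most one box is removed and at
each whole step at most one box is added; constant after position `2k`. -/
def VacSeq (k : ℕ) (f : ℕ → YoungDiagram) : Prop :=
  f 0 = ⊥ ∧
  (∀ i < k, f (2*i+1) ≤ f (2*i) ∧ (f (2*i)).card ≤ (f (2*i+1)).card + 1) ∧
  (∀ i < k, f (2*i+1) ≤ f (2*i+2) ∧ (f (2*i+2)).card ≤ (f (2*i+1)).card + 1) ∧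
  (∀ j, 2*k ≤ j → f j = f (2*k))

/-- The number of vacillating tableaux of shape `lam` and length `2k`. -/
noncomputable def mVT (k : ℕ) (lam : YoungDiagram) : ℕ :=
  Nat.card {f : ℕ → YoungDiagram // VacSeq k f ∧ f (2*k) = lam}
/-- Vacillating tableaux of length `2k` as a type. -/
def VacTab (k : ℕ) : Type := {f : ℕ → YoungDiagram // VacSeq k f}

/-- Pairs of vacillating tableaux of length `2k` with the same final shape. -/
def VacPairs (k : ℕ) : Type :=
  {pq : VacTab k × VacTab k // pq.1.1 (2*k) = pq.2.1 (2*k)}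

/-!
Let `X` and `Y` be the operators on functions on Young's lattice that sum a function over the
diagrams obtained from a given one by removing, respectively adding, at most one box. In a modular
lattice, distinct elements with a common upper cover correspond to those with a common lower cover,
and a diagram has one more addable than removable cell; hence `Y X = X Y + 1`. As in the Weyl
algebra, normal ordering gives `(X Y) ^ n = ∑ j, S(n, j) X ^ j Y ^ j` with Stirling numbers of the
second kind as coefficients.

Two vacillating tableaux of length `2 k` with the same shape, the second one reversed, form a closed
walk at `⊥`, and these walks are counted by `(X Y) ^ (2 k)`, applied to the indicator function `δ`
of `⊥` and evaluated at `⊥`. Since `Y δ = δ` and `(X φ) ⊥ = φ ⊥`, their number is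
`∑ j, S(2 k, j)`, which counts the set partitions of `2 k` points by their number of blocks.
-/

open Finset

section StirlingNumbers

lemma sum_stirlingSecond_succ_nsmul {M : Type*} [AddCommMonoid M] (n : ℕ) (φ : ℕ → M) :
    ∑ j ∈ range (n + 2), (n + 1).stirlingSecond j • φ j =
      ∑ j ∈ range (n + 1), n.stirlingSecond j • (φ (j + 1) + j • φ j) := by
  have shift : ∑ j ∈ range (n + 1), ((j + 1) * n.stirlingSecond (j + 1)) • φ (j + 1) =
      ∑ j ∈ range (n + 1), (j * n.stirlingSecond j) • φ j := by
    have := sum_range_succ' (fun j ↦ (j * n.stirlingSecond j) • φ j) (n + 1)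
    rw [sum_range_succ] at this
    simpa [Nat.stirlingSecond_eq_zero_of_lt n.lt_succ_self] using this.symm
  calc ∑ j ∈ range (n + 2), (n + 1).stirlingSecond j • φ j
      = ∑ j ∈ range (n + 1), (n + 1).stirlingSecond (j + 1) • φ (j + 1) := by
        simp [sum_range_succ' _ (n + 1)]
    _ = ∑ j ∈ range (n + 1), n.stirlingSecond j • (φ (j + 1) + j • φ j) := by
        simp only [Nat.stirlingSecond_succ_succ, add_smul, sum_add_distrib, shift, smul_add,
          smul_smul, mul_comm (n.stirlingSecond _), add_comm]

variable {A : Type*} [Semiring A] {x y : A}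

lemma mul_mul_pow_of_comm_add_one (h : y * x = x * y + 1) (j : ℕ) :
    x * y * x ^ j = x ^ (j + 1) * y + j • x ^ j := by
  induction j with
  | zero => simp
  | succ j ih =>
    calc x * y * x ^ (j + 1) = x * y * x ^ j * x := by rw [pow_succ, ← mul_assoc]
      _ = x ^ (j + 1) * (y * x) + j • x ^ (j + 1) := by
        rw [ih, add_mul, mul_assoc, smul_mul_assoc, ← pow_succ]
      _ = x ^ (j + 2) * y + (j + 1) • x ^ (j + 1) := by
        rw [h, mul_add, ← mul_assoc, ← pow_succ, mul_one, add_assoc, succ_nsmul']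

theorem mul_pow_eq_sum_stirlingSecond (h : y * x = x * y + 1) (n : ℕ) :
    (x * y) ^ n = ∑ j ∈ range (n + 1), n.stirlingSecond j • (x ^ j * y ^ j) := by
  induction n with
  | zero => simp
  | succ n ih =>
    rw [pow_succ', ih, mul_sum, sum_stirlingSecond_succ_nsmul]
    refine sum_congr rfl fun j _ ↦ ?_
    rw [mul_smul_comm, ← mul_assoc, mul_mul_pow_of_comm_add_one h, add_mul, smul_mul_assoc,
      mul_assoc _ y, ← pow_succ']

end StirlingNumbers

section SetPartitions

variable {α : Type*} [DecidableEq α]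

lemma le_of_mem_insert_bot_parts [Lattice α] [OrderBot α] {a u : α} (P : Finpartition a)
    (hu : u ∈ insert ⊥ P.parts) : u ≤ a := by
  rcases mem_insert.1 hu with rfl | hu
  exacts [bot_le, P.le hu]

lemma parts_avoid_of_mem_insert_bot [GeneralizedBooleanAlgebra α] {a u : α} (P : Finpartition a)
    (hu : u ∈ insert ⊥ P.parts) : (P.avoid u).parts = P.parts.erase u := by
  have disjoint_of_ne {d : α} (hd : d ∈ P.parts) (hdu : d ≠ u) : Disjoint d u := by
    rcases mem_insert.1 hu with rfl | hu
    exacts [disjoint_bot_right, P.disjoint hd hu hdu]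
  ext c
  rw [Finpartition.mem_avoid, mem_erase]
  constructor
  · rintro ⟨d, hd, hdu, rfl⟩
    have hne : d ≠ u := fun h ↦ hdu h.le
    rw [(disjoint_of_ne hd hne).sdiff_eq_left]
    exact ⟨hne, hd⟩
  · rintro ⟨hne, hc⟩
    have hdisj := disjoint_of_ne hc hne
    exact ⟨c, hc, fun hle ↦ P.ne_bot hc (hdisj.eq_bot_of_le hle), hdisj.sdiff_eq_left⟩

variable {s : Finset α} {a : α}

/-- The partition of `insert a s` obtained from a partition `P` of `s` by adding the new point `a`
to the block `u`; the choice `u = ∅` makes `{a}` a block of its own. -/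
def insertIntoPart (ha : a ∉ s) (P : Finpartition s) {u : Finset α} (hu : u ∈ insert ∅ P.parts) :
    Finpartition (insert a s) :=
  (P.avoid u).extend (b := insert a u) (insert_ne_empty a u)
    (disjoint_insert_right.2 ⟨fun h ↦ ha (mem_sdiff.1 h).1, sdiff_disjoint⟩)
    (by rw [sup_eq_union, union_insert, sdiff_union_of_subset (le_of_mem_insert_bot_parts P hu)])

lemma parts_insertIntoPart (ha : a ∉ s) (P : Finpartition s) {u : Finset α}
    (hu : u ∈ insert ∅ P.parts) :
    (insertIntoPart ha P hu).parts = insert (insert a u) (P.parts.erase u) := by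
  rw [← parts_avoid_of_mem_insert_bot P hu]
  rfl

lemma card_parts_insertIntoPart (ha : a ∉ s) (P : Finpartition s) {u : Finset α}
    (hu : u ∈ insert ∅ P.parts) :
    #(insertIntoPart ha P hu).parts = if u = ∅ then #P.parts + 1 else #P.parts := by
  have notMem : insert a u ∉ P.parts.erase u := fun h ↦
    ha (P.le (mem_of_mem_erase h) (mem_insert_self a u))
  rw [parts_insertIntoPart, card_insert_of_notMem notMem]
  split_ifs with h
  · rw [h, erase_eq_of_notMem P.empty_notMem_parts]
  · exact card_erase_add_one (mem_of_mem_insert_of_ne hu h)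

lemma part_insertIntoPart (ha : a ∉ s) (P : Finpartition s) {u : Finset α}
    (hu : u ∈ insert ∅ P.parts) : (insertIntoPart ha P hu).part a = insert a u :=
  Finpartition.part_eq_of_mem _ (by simp [parts_insertIntoPart]) (mem_insert_self a u)

lemma parts_restrict {t : Finset α} (Q : Finpartition t) (hst : s ⊆ t) :
    (Q.restrict hst).parts = (Q.parts.image (· ∩ s)).erase ∅ :=
  rfl

lemma restrict_insertIntoPart (ha : a ∉ s) (P : Finpartition s) {u : Finset α}
    (hu : u ∈ insert ∅ P.parts) : (insertIntoPart ha P hu).restrict (subset_insert a s) = P := by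
  have image_inter : (P.parts.erase u).image (· ∩ s) = P.parts.erase u :=
    (image_congr fun t ht ↦ inter_eq_left.2 (P.le (mem_of_mem_erase ht))).trans image_id
  ext1
  rw [parts_restrict, parts_insertIntoPart, image_insert, insert_inter_of_notMem ha,
    inter_eq_left.2 (le_of_mem_insert_bot_parts P hu), image_inter]
  rcases mem_insert.1 hu with rfl | hu
  · rw [erase_insert (notMem_erase _ _), erase_eq_of_notMem P.empty_notMem_parts]
  · rw [insert_erase hu, erase_eq_of_notMem P.empty_notMem_parts]

lemma part_inter_mem_parts_restrict {t : Finset α} (Q : Finpartition t) (hst : s ⊆ t)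
    (hat : a ∈ t) : Q.part a ∩ s ∈ insert ∅ (Q.restrict hst).parts := by
  rw [mem_insert, or_iff_not_imp_left, parts_restrict]
  exact fun hne ↦ mem_erase.2 ⟨hne, mem_image_of_mem _ (Q.part_mem.2 hat)⟩

lemma insert_part_inter (Q : Finpartition (insert a s)) : insert a (Q.part a ∩ s) = Q.part a := by
  have haQ : a ∈ Q.part a := Q.mem_part_self.2 (mem_insert_self a s)
  rw [insert_inter_distrib, insert_eq_of_mem haQ, inter_eq_left.2 (Q.part_subset a)]

lemma parts_restrict_erase_part_inter (Q : Finpartition (insert a s)) :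
    (Q.restrict (subset_insert a s)).parts.erase (Q.part a ∩ s) = Q.parts.erase (Q.part a) := by
  have hpart : Q.part a ∈ Q.parts := Q.part_mem.2 (mem_insert_self a s)
  have inter_eq {t : Finset α} (ht : t ∈ Q.parts.erase (Q.part a)) : t ∩ s = t := by
    have hat : a ∉ t := fun h ↦ ne_of_mem_erase ht (Q.part_eq_of_mem (mem_of_mem_erase ht) h).symm
    exact inter_eq_left.2 ((subset_insert_iff_of_notMem hat).1 (Q.le (mem_of_mem_erase ht)))
  have image_inter : (Q.parts.erase (Q.part a)).image (· ∩ s) = Q.parts.erase (Q.part a) :=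
    (image_congr fun t ht ↦ inter_eq ht).trans image_id
  have empty_notMem : ∅ ∉ Q.parts.erase (Q.part a) := fun h ↦
    Q.empty_notMem_parts (mem_of_mem_erase h)
  have notMem : Q.part a ∩ s ∉ Q.parts.erase (Q.part a) := fun h ↦ by
    have hdisj := Q.disjoint (mem_of_mem_erase h) hpart (ne_of_mem_erase h)
    have h0 : Q.part a ∩ s = ∅ := hdisj.eq_bot_of_le inter_subset_left
    exact empty_notMem (h0 ▸ h)
  rw [parts_restrict, ← insert_erase hpart, image_insert, image_inter, erase_right_comm,
    erase_insert notMem, erase_eq_of_notMem empty_notMem, erase_insert (notMem_erase _ _)]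

lemma insertIntoPart_restrict (ha : a ∉ s) (Q : Finpartition (insert a s)) :
    insertIntoPart ha (Q.restrict (subset_insert a s))
      (part_inter_mem_parts_restrict Q _ (mem_insert_self a s)) = Q := by
  ext1
  rw [parts_insertIntoPart, insert_part_inter, parts_restrict_erase_part_inter,
    insert_erase (Q.part_mem.2 (mem_insert_self a s))]

/-- A partition of `insert a s` is a partition of `s` together with the block, possibly empty,
that receives the new point `a`. -/
def finpartitionInsertEquiv (ha : a ∉ s) :
    Finpartition (insert a s) ≃ Σ P : Finpartition s, {u // u ∈ insert ∅ P.parts} where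
  toFun Q := ⟨Q.restrict (subset_insert a s), Q.part a ∩ s,
    part_inter_mem_parts_restrict Q _ (mem_insert_self a s)⟩
  invFun p := insertIntoPart ha p.1 p.2.2
  left_inv Q := insertIntoPart_restrict ha Q
  right_inv p := Sigma.subtype_ext (restrict_insertIntoPart ha p.1 p.2.2) <| by
    change (insertIntoPart ha p.1 p.2.2).part a ∩ s = p.2.1
    rw [part_insertIntoPart, insert_inter_of_notMem ha,
      inter_eq_left.2 (le_of_mem_insert_bot_parts p.1 p.2.2)]

lemma sum_card_parts_insert {M : Type*} [AddCommMonoid M] (ha : a ∉ s) (φ : ℕ → M) :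
    ∑ Q : Finpartition (insert a s), φ #Q.parts =
      ∑ P : Finpartition s, (φ (#P.parts + 1) + #P.parts • φ #P.parts) := by
  rw [← (finpartitionInsertEquiv ha).symm.sum_comp, Fintype.sum_sigma]
  refine sum_congr rfl fun P _ ↦ ?_
  calc ∑ u : {u // u ∈ insert ∅ P.parts}, φ #(insertIntoPart ha P u.2).parts
      = ∑ u ∈ insert ∅ P.parts, φ (if u = ∅ then #P.parts + 1 else #P.parts) := by
        simp only [card_parts_insertIntoPart]
        exact sum_coe_sort (insert ∅ P.parts) fun u ↦ φ (if u = ∅ then #P.parts + 1 else #P.parts)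
    _ = φ (#P.parts + 1) + #P.parts • φ #P.parts := by
        rw [sum_insert P.empty_notMem_parts, if_pos rfl, ← sum_const]
        refine congrArg _ (sum_congr rfl fun u hu ↦ ?_)
        rw [if_neg (P.nonempty_of_mem_parts hu).ne_empty]

lemma sum_card_parts_eq_sum_stirlingSecond {M : Type*} [AddCommMonoid M] (s : Finset α)
    (φ : ℕ → M) :
    ∑ P : Finpartition s, φ #P.parts = ∑ j ∈ range (#s + 1), (#s).stirlingSecond j • φ j := by
  induction s using Finset.induction_on generalizing φ with
  | empty =>
    change ∑ P : Finpartition (⊥ : Finset α), φ #P.parts = _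
    rw [Fintype.sum_unique, Finpartition.parts_eq_empty_iff.2 rfl]
    simp
  | insert a s ha ih =>
    rw [sum_card_parts_insert ha, ih fun j ↦ φ (j + 1) + j • φ j, card_insert_of_notMem ha,
      sum_stirlingSecond_succ_nsmul]

theorem card_finpartition_eq_sum_stirlingSecond (s : Finset α) :
    Fintype.card (Finpartition s) = ∑ j ∈ range (#s + 1), (#s).stirlingSecond j := by
  simpa using sum_card_parts_eq_sum_stirlingSecond s fun _ ↦ (1 : ℕ)

end SetPartitions

section DifferentialLattices

/-- Stanley's `1`-differential lattices: modular lattices in which every element has finitely many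
upper and lower covers, with exactly one more upper cover than lower covers. The cover relation
replaces the rank function of the usual definition. -/
class DifferentialLattice (α : Type*) [Lattice α] : Prop extends IsModularLattice α where
  finite_setOf_lower_covBy (a : α) : {b | b ⋖ a}.Finite
  finite_setOf_upper_covBy (a : α) : {b | a ⋖ b}.Finite
  ncard_upper_covBy (a : α) : {b | a ⋖ b}.ncard = {b | b ⋖ a}.ncard + 1

lemma setOf_upper_wcovBy {α : Type*} [PartialOrder α] (a : α) :
    {b | a ⩿ b} = insert a {b | a ⋖ b} := by
  ext b
  simp only [Set.mem_ofPred_eq, Set.mem_insert_iff, wcovBy_iff_eq_or_covBy, eq_comm]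

lemma setOf_lower_wcovBy {α : Type*} [PartialOrder α] (a : α) :
    {b | b ⩿ a} = insert a {b | b ⋖ a} := by
  ext b
  simp only [Set.mem_ofPred_eq, Set.mem_insert_iff, wcovBy_iff_eq_or_covBy]

lemma wcovBy_sup_iff_inf_wcovBy {α : Type*} [Lattice α] [IsModularLattice α] {a b : α} :
    a ⩿ a ⊔ b ↔ a ⊓ b ⩿ b := by
  rw [wcovBy_iff_eq_or_covBy, wcovBy_iff_eq_or_covBy, left_eq_sup, inf_eq_right]
  exact or_congr_right ⟨inf_covBy_of_covBy_sup_left, covBy_sup_of_inf_covBy_right⟩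

variable {α : Type*} [Lattice α] [DifferentialLattice α] {a b : α}

lemma finite_setOf_upper_wcovBy (a : α) : {b | a ⩿ b}.Finite := by
  rw [setOf_upper_wcovBy]
  exact (DifferentialLattice.finite_setOf_upper_covBy a).insert a

lemma finite_setOf_lower_wcovBy (a : α) : {b | b ⩿ a}.Finite := by
  rw [setOf_lower_wcovBy]
  exact (DifferentialLattice.finite_setOf_lower_covBy a).insert a

/-- The elements obtained from `a` by going up at most one step: `a` and its upper covers. -/
noncomputable def upperWCovers (a : α) : Finset α := (finite_setOf_upper_wcovBy a).toFinset

/-- The elements obtained from `a` by going down at most one step: `a` and its lower covers. -/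
noncomputable def lowerWCovers (a : α) : Finset α := (finite_setOf_lower_wcovBy a).toFinset

@[simp] lemma mem_upperWCovers : b ∈ upperWCovers a ↔ a ⩿ b := Set.Finite.mem_toFinset _

@[simp] lemma mem_lowerWCovers : b ∈ lowerWCovers a ↔ b ⩿ a := Set.Finite.mem_toFinset _

lemma card_upperWCovers (a : α) : #(upperWCovers a) = #(lowerWCovers a) + 1 := by
  rw [upperWCovers, lowerWCovers, ← Set.ncard_eq_toFinset_card _ _,
    ← Set.ncard_eq_toFinset_card _ _, setOf_upper_wcovBy, setOf_lower_wcovBy,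
    Set.ncard_insert_of_notMem (fun h ↦ h.ne rfl) (DifferentialLattice.finite_setOf_upper_covBy a),
    Set.ncard_insert_of_notMem (fun h ↦ h.ne rfl) (DifferentialLattice.finite_setOf_lower_covBy a),
    DifferentialLattice.ncard_upper_covBy]

/-- In a modular lattice, distinct `a` and `c` have a common upper weak cover, necessarily `a ⊔ c`,
if and only if they have a common lower weak cover, necessarily `a ⊓ c`. -/
lemma sum_upperWCovers_lowerWCovers_erase {M : Type*} [AddCommMonoid M] [DecidableEq α] (φ : α → M)
    (a : α) :
    ∑ b ∈ upperWCovers a, ∑ c ∈ (lowerWCovers b).erase a, φ c =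
      ∑ b ∈ lowerWCovers a, ∑ c ∈ (upperWCovers b).erase a, φ c := by
  rw [sum_sigma', sum_sigma']
  refine sum_bij' (fun p _ ↦ ⟨a ⊓ p.2, p.2⟩) (fun p _ ↦ ⟨a ⊔ p.2, p.2⟩) ?_ ?_ ?_ ?_
    fun _ _ ↦ rfl <;> rintro ⟨b, c⟩ h <;>
    simp only [mem_sigma, mem_erase, mem_upperWCovers, mem_lowerWCovers] at h ⊢ <;>
    obtain ⟨hab, hca, hcb⟩ := h
  · obtain rfl := hab.sup_eq hcb hca.symm
    exact ⟨by rwa [inf_comm, ← wcovBy_sup_iff_inf_wcovBy, sup_comm], hca,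
      wcovBy_sup_iff_inf_wcovBy.1 hab⟩
  · obtain rfl := hab.inf_eq hcb hca.symm
    exact ⟨wcovBy_sup_iff_inf_wcovBy.2 hcb, hca,
      by rwa [sup_comm, wcovBy_sup_iff_inf_wcovBy, inf_comm]⟩
  · rw [hab.sup_eq hcb hca.symm]
  · rw [hab.inf_eq hcb hca.symm]

variable {R : Type*} [Semiring R]

variable (α R) in
/-- The operator summing a function over the lower weak covers of its argument. -/
noncomputable def lowerSum : Module.End R (α → R) where
  toFun φ a := ∑ b ∈ lowerWCovers a, φ b
  map_add' _ _ := funext fun _ ↦ sum_add_distrib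
  map_smul' r φ := funext fun a ↦ (mul_sum (lowerWCovers a) φ r).symm

variable (α R) in
/-- The operator summing a function over the upper weak covers of its argument. -/
noncomputable def upperSum : Module.End R (α → R) where
  toFun φ a := ∑ b ∈ upperWCovers a, φ b
  map_add' _ _ := funext fun _ ↦ sum_add_distrib
  map_smul' r φ := funext fun a ↦ (mul_sum (upperWCovers a) φ r).symm

lemma lowerSum_apply (φ : α → R) (a : α) : lowerSum α R φ a = ∑ b ∈ lowerWCovers a, φ b := rfl

lemma upperSum_apply (φ : α → R) (a : α) : upperSum α R φ a = ∑ b ∈ upperWCovers a, φ b := rfl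

lemma upperSum_lowerSum_apply [DecidableEq α] (φ : α → R) (a : α) :
    upperSum α R (lowerSum α R φ) a = #(upperWCovers a) • φ a +
      ∑ b ∈ upperWCovers a, ∑ c ∈ (lowerWCovers b).erase a, φ c := by
  simp only [upperSum_apply, lowerSum_apply]
  rw [← sum_const, ← sum_add_distrib]
  exact sum_congr rfl fun b hb ↦
    (add_sum_erase _ φ (mem_lowerWCovers.2 (mem_upperWCovers.1 hb))).symm

lemma lowerSum_upperSum_apply [DecidableEq α] (φ : α → R) (a : α) :
    lowerSum α R (upperSum α R φ) a = #(lowerWCovers a) • φ a +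
      ∑ b ∈ lowerWCovers a, ∑ c ∈ (upperWCovers b).erase a, φ c := by
  simp only [upperSum_apply, lowerSum_apply]
  rw [← sum_const, ← sum_add_distrib]
  exact sum_congr rfl fun b hb ↦
    (add_sum_erase _ φ (mem_upperWCovers.2 (mem_lowerWCovers.1 hb))).symm

theorem upperSum_mul_lowerSum : upperSum α R * lowerSum α R = lowerSum α R * upperSum α R + 1 := by
  classical
  ext1 φ
  funext a
  change upperSum α R (lowerSum α R φ) a = lowerSum α R (upperSum α R φ) a + φ a
  rw [upperSum_lowerSum_apply, lowerSum_upperSum_apply, card_upperWCovers,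
    sum_upperWCovers_lowerWCovers_erase, succ_nsmul, add_right_comm]

section OrderBot

variable [OrderBot α]

lemma lowerSum_apply_bot (φ : α → R) : lowerSum α R φ ⊥ = φ ⊥ := by
  have : lowerWCovers (⊥ : α) = {⊥} := by
    ext a
    simp only [mem_lowerWCovers, mem_singleton]
    exact ⟨fun h ↦ le_bot_iff.1 h.le, fun h ↦ h ▸ WCovBy.refl _⟩
  rw [lowerSum_apply, this, sum_singleton]

lemma lowerSum_pow_apply_bot (φ : α → R) (n : ℕ) : (lowerSum α R ^ n) φ ⊥ = φ ⊥ := by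
  induction n with
  | zero => rfl
  | succ n ih => rw [pow_succ', Module.End.mul_apply, lowerSum_apply_bot, ih]

variable [DecidableEq α]

lemma upperSum_single_bot :
    upperSum α R (Pi.single ⊥ 1) = Pi.single ⊥ 1 := by
  funext a
  have mem_iff : ⊥ ∈ upperWCovers a ↔ a = ⊥ := by
    rw [mem_upperWCovers]
    exact ⟨fun h ↦ le_bot_iff.1 h.le, fun h ↦ h ▸ WCovBy.refl _⟩
  simp only [upperSum_apply, Pi.single_apply, sum_ite_eq', mem_iff]

lemma upperSum_pow_single_bot (n : ℕ) :
    (upperSum α R ^ n) (Pi.single ⊥ 1) = Pi.single ⊥ 1 := by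
  induction n with
  | zero => rfl
  | succ n ih => rw [pow_succ', Module.End.mul_apply, ih, upperSum_single_bot]

theorem lowerSum_mul_upperSum_pow_single_bot_apply_bot (n : ℕ) :
    ((lowerSum α R * upperSum α R) ^ n) (Pi.single ⊥ 1) ⊥ =
      ∑ j ∈ range (n + 1), (n.stirlingSecond j : R) := by
  simp [mul_pow_eq_sum_stirlingSecond upperSum_mul_lowerSum, upperSum_pow_single_bot,
    lowerSum_pow_apply_bot]

end OrderBot

lemma lowerSum_upperSum_single_comm [DecidableEq α] (a b : α) :
    lowerSum α R (upperSum α R (Pi.single a 1)) b =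
      lowerSum α R (upperSum α R (Pi.single b 1)) a := by
  have card_inter (a b : α) : lowerSum α R (upperSum α R (Pi.single a 1)) b =
      #(lowerWCovers a ∩ lowerWCovers b) := by
    have mem_iff (c : α) : a ∈ upperWCovers c ↔ c ∈ lowerWCovers a := by simp
    simp [lowerSum_apply, upperSum_apply, Pi.single_apply, -mem_upperWCovers, -mem_lowerWCovers,
      mem_iff, inter_comm]
  rw [card_inter, card_inter, inter_comm]

end DifferentialLattices

section YoungLattice

variable {l m : YoungDiagram} {c : ℕ × ℕ} {i j : ℕ}

/-- The diagram obtained by adding an addable cell, i.e. a minimal cell outside `l`. -/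
def addBox (l : YoungDiagram) (hc : Minimal (· ∉ l) c) : YoungDiagram where
  cells := insert c l.cells
  isLowerSet a b hba ha := by
    simp only [coe_insert, Set.mem_insert_iff, mem_coe, YoungDiagram.mem_cells] at ha ⊢
    rw [or_iff_not_imp_right]
    intro hb
    rcases ha with rfl | ha
    exacts [hba.antisymm (hc.le_of_le hb hba), absurd (l.isLowerSet hba ha) hb]

/-- The diagram obtained by removing a removable cell, i.e. a maximal cell of `l`. -/
def removeBox (l : YoungDiagram) (hc : Maximal (· ∈ l) c) : YoungDiagram where
  cells := l.cells.erase c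
  isLowerSet := by
    rw [coe_erase]
    exact l.isLowerSet.erase fun b hb hcb ↦ (hc.le_of_ge hb hcb).antisymm hcb

lemma covBy_of_cells_covBy (h : l.cells ⋖ m.cells) : l ⋖ m :=
  CovBy.of_image ⟨⟨YoungDiagram.cells, fun _ _ ↦ YoungDiagram.ext⟩, Iff.rfl⟩ h

lemma covBy_addBox (hc : Minimal (· ∉ l) c) : l ⋖ addBox l hc :=
  covBy_of_cells_covBy (covBy_insert hc.prop)

lemma removeBox_covBy (hc : Maximal (· ∈ l) c) : removeBox l hc ⋖ l :=
  covBy_of_cells_covBy (erase_covBy hc.prop)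

lemma addBox_injective :
    Function.Injective fun c : {c // Minimal (· ∉ l) c} ↦ addBox l c.2 := fun c _ h ↦
  Subtype.ext ((insert_inj c.2.prop).1 (congrArg YoungDiagram.cells h))

lemma removeBox_injective :
    Function.Injective fun c : {c // Maximal (· ∈ l) c} ↦ removeBox l c.2 := fun c d h ↦
  Subtype.ext (erase_injOn _ c.2.prop d.2.prop (congrArg YoungDiagram.cells h))

lemma exists_addBox_eq_of_covBy (h : l ⋖ m) : ∃ c : {c // Minimal (· ∉ l) c}, addBox l c.2 = m := by
  have hne : (m.cells \ l.cells).Nonempty := sdiff_nonempty.2 fun hle ↦ h.lt.not_ge hle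
  obtain ⟨c, hcmin⟩ := exists_minimal hne
  have ⟨hcm, hcl⟩ := mem_sdiff.1 hcmin.prop
  have hc : Minimal (· ∉ l) c :=
    ⟨hcl, fun d hd hdc ↦ hcmin.le_of_le (mem_sdiff.2 ⟨m.isLowerSet hdc hcm, hd⟩) hdc⟩
  refine ⟨⟨c, hc⟩, ((h.eq_or_eq (covBy_addBox hc).le ?_).resolve_left (covBy_addBox hc).ne')⟩
  exact insert_subset hcm h.le

lemma exists_removeBox_eq_of_covBy (h : m ⋖ l) :
    ∃ c : {c // Maximal (· ∈ l) c}, removeBox l c.2 = m := by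
  have hne : (l.cells \ m.cells).Nonempty := sdiff_nonempty.2 fun hle ↦ h.lt.not_ge hle
  obtain ⟨c, hcmax⟩ := exists_maximal hne
  have ⟨hcl, hcm⟩ := mem_sdiff.1 hcmax.prop
  have hc : Maximal (· ∈ l) c :=
    ⟨hcl, fun d hd hcd ↦ hcmax.le_of_ge (mem_sdiff.2 ⟨hd, fun h ↦ hcm (m.isLowerSet hcd h)⟩) hcd⟩
  refine ⟨⟨c, hc⟩, ((h.eq_or_eq ?_ (removeBox_covBy hc).le).resolve_right (removeBox_covBy hc).ne)⟩
  exact subset_erase.2 ⟨h.le, hcm⟩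

/-- The upper covers of `l` correspond to its addable cells. -/
noncomputable def addableEquiv (l : YoungDiagram) : {c // Minimal (· ∉ l) c} ≃ {m // l ⋖ m} :=
  Equiv.ofBijective (fun c ↦ ⟨addBox l c.2, covBy_addBox c.2⟩)
    ⟨fun _ _ h ↦ addBox_injective (congrArg Subtype.val h),
      fun m ↦ (exists_addBox_eq_of_covBy m.2).imp fun _ ↦ Subtype.ext⟩

/-- The lower covers of `l` correspond to its removable cells. -/
noncomputable def removableEquiv (l : YoungDiagram) : {c // Maximal (· ∈ l) c} ≃ {m // m ⋖ l} :=
  Equiv.ofBijective (fun c ↦ ⟨removeBox l c.2, removeBox_covBy c.2⟩)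
    ⟨fun _ _ h ↦ removeBox_injective (congrArg Subtype.val h),
      fun m ↦ (exists_removeBox_eq_of_covBy m.2).imp fun _ ↦ Subtype.ext⟩

lemma minimal_notMem_zero_iff : Minimal (· ∉ l) (0, j) ↔ j = l.rowLen 0 := by
  simp only [Minimal, Prod.forall, Prod.mk_le_mk, YoungDiagram.mem_iff_lt_rowLen]
  constructor
  · rintro ⟨hj, hmin⟩
    have := hmin 0 (l.rowLen 0) (lt_irrefl _) ⟨le_rfl, by lia⟩
    lia
  · rintro rfl
    refine ⟨lt_irrefl _, fun a b hb hab ↦ ?_⟩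
    obtain rfl : a = 0 := by lia
    lia

lemma minimal_notMem_succ_iff :
    Minimal (· ∉ l) (i + 1, j) ↔ j = l.rowLen (i + 1) ∧ l.rowLen (i + 1) < l.rowLen i := by
  simp only [Minimal, Prod.forall, Prod.mk_le_mk, YoungDiagram.mem_iff_lt_rowLen]
  constructor
  · rintro ⟨hj, hmin⟩
    have row := hmin (i + 1) (l.rowLen (i + 1)) (lt_irrefl _) ⟨le_rfl, by lia⟩
    have col := hmin i j
    lia
  · rintro ⟨rfl, hlt⟩
    refine ⟨lt_irrefl _, fun a b hb hab ↦ ?_⟩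
    obtain rfl | ha : a = i + 1 ∨ a ≤ i := by lia
    · lia
    · have := l.rowLen_anti a i ha
      lia

lemma maximal_mem_iff_rowLen :
    Maximal (· ∈ l) (i, j) ↔ j + 1 = l.rowLen i ∧ l.rowLen (i + 1) < l.rowLen i := by
  simp only [Maximal, Prod.forall, Prod.mk_le_mk, YoungDiagram.mem_iff_lt_rowLen]
  constructor
  · rintro ⟨hj, hmax⟩
    have row := hmax i (j + 1)
    have col := hmax (i + 1) j
    lia
  · rintro ⟨hj, hlt⟩
    refine ⟨by lia, fun a b hb hab ↦ ?_⟩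
    obtain rfl | ha : a = i ∨ i + 1 ≤ a := by lia
    · lia
    · have := l.rowLen_anti (i + 1) a ha
      lia

/-- Every removable cell makes room for a new cell in the row below it, and the first row always
has room. -/
lemma setOf_minimal_notMem (l : YoungDiagram) :
    {c | Minimal (· ∉ l) c} = insert (0, l.rowLen 0)
      ((fun c : ℕ × ℕ ↦ (c.1 + 1, l.rowLen (c.1 + 1))) '' {c | Maximal (· ∈ l) c}) := by
  ext ⟨i, j⟩
  cases i with
  | zero => simp [minimal_notMem_zero_iff]
  | succ i =>
    simp only [Set.mem_ofPred_eq, minimal_notMem_succ_iff, Set.mem_insert_iff, Set.mem_image,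
      Prod.exists, maximal_mem_iff_rowLen, Prod.mk.injEq]
    constructor
    · rintro ⟨rfl, hlt⟩
      exact .inr ⟨i, l.rowLen i - 1, ⟨by lia, hlt⟩, rfl, rfl⟩
    · rintro (⟨h, -⟩ | ⟨a, b, ⟨-, hlt⟩, ha, rfl⟩)
      · lia
      · obtain rfl : a = i := by lia
        exact ⟨rfl, hlt⟩

lemma finite_setOf_maximal_mem (l : YoungDiagram) : {c | Maximal (· ∈ l) c}.Finite :=
  l.cells.finite_toSet.subset fun _ hc ↦ hc.prop

lemma finite_setOf_minimal_notMem (l : YoungDiagram) : {c | Minimal (· ∉ l) c}.Finite := by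
  rw [setOf_minimal_notMem]
  exact ((finite_setOf_maximal_mem l).image _).insert _

lemma ncard_setOf_minimal_notMem (l : YoungDiagram) :
    {c | Minimal (· ∉ l) c}.ncard = {c | Maximal (· ∈ l) c}.ncard + 1 := by
  have hfin := (finite_setOf_maximal_mem l).image fun c ↦ (c.1 + 1, l.rowLen (c.1 + 1))
  have hinj : Set.InjOn (fun c : ℕ × ℕ ↦ (c.1 + 1, l.rowLen (c.1 + 1)))
      {c | Maximal (· ∈ l) c} := by
    rintro ⟨i, j⟩ hc ⟨i', j'⟩ hc' h
    obtain rfl : i = i' := by simpa using congrArg Prod.fst h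
    have := (maximal_mem_iff_rowLen.1 hc).1
    have := (maximal_mem_iff_rowLen.1 hc').1
    exact Prod.ext rfl (by lia)
  rw [setOf_minimal_notMem, Set.ncard_insert_of_notMem _ hfin, hinj.ncard_image]
  rintro ⟨c, -, h⟩
  exact Nat.succ_ne_zero _ (congrArg Prod.fst h)

instance : DifferentialLattice YoungDiagram where
  finite_setOf_lower_covBy l :=
    have : Finite {c // Maximal (· ∈ l) c} := finite_setOf_maximal_mem l
    Set.finite_coe_iff.1 (Finite.of_equiv _ (removableEquiv l))
  finite_setOf_upper_covBy l :=
    have : Finite {c // Minimal (· ∉ l) c} := finite_setOf_minimal_notMem l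
    Set.finite_coe_iff.1 (Finite.of_equiv _ (addableEquiv l))
  ncard_upper_covBy l :=
    calc {m | l ⋖ m}.ncard = {c | Minimal (· ∉ l) c}.ncard := (Nat.card_congr (addableEquiv l)).symm
      _ = {c | Maximal (· ∈ l) c}.ncard + 1 := ncard_setOf_minimal_notMem l
      _ = {m | m ⋖ l}.ncard + 1 := congrArg (· + 1) (Nat.card_congr (removableEquiv l))

lemma covBy_iff_cells_covBy : l ⋖ m ↔ l.cells ⋖ m.cells := by
  refine ⟨fun h ↦ ?_, covBy_of_cells_covBy⟩
  obtain ⟨⟨c, hc⟩, rfl⟩ := exists_addBox_eq_of_covBy h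
  exact covBy_insert hc.prop

lemma wcovBy_iff_le_and_card_le : l ⩿ m ↔ l ≤ m ∧ m.card ≤ l.card + 1 := by
  rw [wcovBy_iff_eq_or_covBy, covBy_iff_cells_covBy, Finset.covBy_iff_card_sdiff_eq_one,
    YoungDiagram.cells_subset_iff]
  have card_sdiff (h : l ≤ m) : #(m.cells \ l.cells) + l.card = m.card :=
    card_sdiff_add_card_eq_card h
  constructor
  · rintro (rfl | ⟨hle, hcard⟩)
    · exact ⟨le_rfl, Nat.le_succ _⟩
    · have := card_sdiff hle
      exact ⟨hle, by lia⟩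
  · rintro ⟨hle, hcard⟩
    have := card_sdiff hle
    obtain h0 | h1 : #(m.cells \ l.cells) = 0 ∨ #(m.cells \ l.cells) = 1 := by lia
    · exact .inl (hle.antisymm (sdiff_eq_empty_iff_subset.1 (card_eq_zero.1 h0)))
    · exact .inr ⟨hle, h1⟩

end YoungLattice

section VacillatingTableaux

variable {k : ℕ} {f : ℕ → YoungDiagram} {n m : YoungDiagram}

lemma vacSeq_iff_wcovBy : VacSeq k f ↔ f 0 = ⊥ ∧ (∀ i < k, f (2 * i + 1) ⩿ f (2 * i)) ∧
    (∀ i < k, f (2 * i + 1) ⩿ f (2 * i + 2)) ∧ ∀ j, 2 * k ≤ j → f j = f (2 * k) := by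
  simp only [VacSeq, wcovBy_iff_le_and_card_le]

namespace VacTab

/-- The final shape of a vacillating tableau. -/
def shape (P : VacTab k) : YoungDiagram := P.1 (2 * k)

/-- The tableau `P` followed by a half-step to `n` and a whole step to `m`. -/
def extend (P : VacTab k) (hn : n ⩿ P.shape) (hm : n ⩿ m) : VacTab (k + 1) where
  val j := if j ≤ 2 * k then P.1 j else if j = 2 * k + 1 then n else m
  property := by
    obtain ⟨h0, hdown, hup, -⟩ := vacSeq_iff_wcovBy.1 P.2
    refine vacSeq_iff_wcovBy.2 ⟨by simpa using h0, fun i hi ↦ ?_, fun i hi ↦ ?_, fun j hj ↦ ?_⟩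
    · obtain rfl | hik : i = k ∨ i < k := by lia
      · simpa [shape] using hn
      · rw [if_pos (by lia), if_pos (by lia)]
        exact hdown i hik
    · obtain rfl | hik : i = k ∨ i < k := by lia
      · simpa using hm
      · rw [if_pos (by lia), if_pos (by lia)]
        exact hup i hik
    · rw [if_neg (by lia), if_neg (by lia), if_neg (by lia), if_neg (by lia)]

/-- The tableau `P` with its last two steps removed. -/
def truncate (P : VacTab (k + 1)) : VacTab k where
  val j := P.1 (min j (2 * k))
  property := by
    obtain ⟨h0, hdown, hup, -⟩ := vacSeq_iff_wcovBy.1 P.2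
    refine vacSeq_iff_wcovBy.2 ⟨by simpa using h0, fun i hi ↦ ?_, fun i hi ↦ ?_, fun j hj ↦ ?_⟩
    · rw [min_eq_left (by lia), min_eq_left (by lia)]
      exact hdown i (by lia)
    · rw [min_eq_left (by lia), min_eq_left (by lia)]
      exact hup i (by lia)
    · rw [min_eq_right hj, min_self]

lemma shape_extend (P : VacTab k) (hn : n ⩿ P.shape) (hm : n ⩿ m) : (P.extend hn hm).shape = m := by
  simp [shape, extend, mul_add]

lemma extend_middle (P : VacTab k) (hn : n ⩿ P.shape) (hm : n ⩿ m) :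
    (P.extend hn hm).1 (2 * k + 1) = n := by
  simp [extend]

lemma truncate_extend (P : VacTab k) (hn : n ⩿ P.shape) (hm : n ⩿ m) :
    (P.extend hn hm).truncate = P := by
  refine Subtype.ext (funext fun j ↦ ?_)
  obtain hj | hj := le_total j (2 * k)
  · simp [truncate, extend, hj]
  · simp [truncate, extend, hj, P.2.2.2.2 j hj]

lemma middle_wcovBy_shape_truncate (P : VacTab (k + 1)) :
    P.1 (2 * k + 1) ⩿ P.truncate.shape := by
  simpa [shape, truncate] using (vacSeq_iff_wcovBy.1 P.2).2.1 k k.lt_succ_self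

lemma middle_wcovBy_shape (P : VacTab (k + 1)) : P.1 (2 * k + 1) ⩿ P.shape :=
  (vacSeq_iff_wcovBy.1 P.2).2.2.1 k k.lt_succ_self

lemma extend_truncate (P : VacTab (k + 1)) :
    P.truncate.extend P.middle_wcovBy_shape_truncate P.middle_wcovBy_shape = P := by
  refine Subtype.ext (funext fun j ↦ ?_)
  simp only [extend, truncate, shape]
  split_ifs with hj hj'
  · rw [min_eq_left hj]
  · rw [hj']
  · exact (P.2.2.2.2 j (by lia)).symm

/-- A vacillating tableau is its truncation together with its last two steps. -/
noncomputable def succEquiv (k : ℕ) : VacTab (k + 1) ≃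
    Σ P : VacTab k, {p // p ∈ (lowerWCovers P.shape).sigma fun n ↦ upperWCovers n} where
  toFun P := ⟨P.truncate, ⟨P.1 (2 * k + 1), P.shape⟩, mem_sigma.2
    ⟨mem_lowerWCovers.2 P.middle_wcovBy_shape_truncate,
      mem_upperWCovers.2 P.middle_wcovBy_shape⟩⟩
  invFun x := x.1.extend (mem_lowerWCovers.1 (mem_sigma.1 x.2.2).1)
    (mem_upperWCovers.1 (mem_sigma.1 x.2.2).2)
  left_inv P := P.extend_truncate
  right_inv _ := Sigma.subtype_ext (truncate_extend _ _ _)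
    (by simp only [extend_middle, shape_extend])

instance : Unique (VacTab 0) where
  default := ⟨fun _ ↦ ⊥, by simp [VacSeq]⟩
  uniq P := Subtype.ext (funext fun j ↦ (P.2.2.2.2 j (Nat.zero_le _)).trans P.2.1)

noncomputable instance instFintype : (k : ℕ) → Fintype (VacTab k)
  | 0 => inferInstance
  | k + 1 => letI := instFintype k; Fintype.ofEquiv _ (succEquiv k).symm

lemma sum_shape_succ {R : Type*} [Semiring R] (k : ℕ) (φ : YoungDiagram → R) :
    ∑ P : VacTab (k + 1), φ P.shape =
      ∑ P : VacTab k, lowerSum YoungDiagram R (upperSum YoungDiagram R φ) P.shape := by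
  rw [← (succEquiv k).symm.sum_comp, Fintype.sum_sigma]
  refine sum_congr rfl fun P _ ↦ ?_
  simp only [succEquiv, Equiv.coe_fn_symm_mk, shape_extend, lowerSum_apply, upperSum_apply]
  rw [sum_coe_sort _ fun p : (_ : YoungDiagram) × YoungDiagram ↦ φ p.2, sum_sigma]

lemma sum_shape {R : Type*} [Semiring R] (k : ℕ) (φ : YoungDiagram → R) :
    ∑ P : VacTab k, φ P.shape = ((lowerSum YoungDiagram R * upperSum YoungDiagram R) ^ k) φ ⊥ := by
  induction k generalizing φ with
  | zero => exact Fintype.sum_unique _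
  | succ k ih => rw [sum_shape_succ, ih, pow_succ, Module.End.mul_apply, Module.End.mul_apply]

end VacTab

lemma mVT_eq_sum_single_shape [DecidableEq YoungDiagram] (k : ℕ) (l : YoungDiagram) :
    mVT k l = ∑ P : VacTab k, (Pi.single l 1 : YoungDiagram → ℕ) P.shape := by
  have card_fiber : mVT k l = Nat.card {P : VacTab k // P.shape = l} :=
    Nat.card_congr (Equiv.subtypeSubtypeEquivSubtypeInter (VacSeq k) fun f ↦ f (2 * k) = l).symm
  simp only [card_fiber, Nat.card_eq_fintype_card, Fintype.card_subtype, Pi.single_apply,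
    card_filter]

lemma mVT_succ (k : ℕ) :
    mVT (k + 1) = (lowerSum YoungDiagram ℕ * upperSum YoungDiagram ℕ) (mVT k) := by
  classical
  have mVT_eq_sum : mVT k = ∑ P : VacTab k, Pi.single P.shape 1 := by
    funext l
    simp only [mVT_eq_sum_single_shape, Finset.sum_apply, Pi.single_apply, eq_comm]
  funext l
  rw [mVT_eq_sum_single_shape, VacTab.sum_shape_succ, mVT_eq_sum, map_sum, Finset.sum_apply]
  exact sum_congr rfl fun P _ ↦ lowerSum_upperSum_single_comm l P.shape

lemma mVT_eq_pow_apply_single_bot [DecidableEq YoungDiagram] (k : ℕ) :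
    mVT k = ((lowerSum YoungDiagram ℕ * upperSum YoungDiagram ℕ) ^ k) (Pi.single ⊥ 1) := by
  induction k with
  | zero =>
    funext l
    rw [mVT_eq_sum_single_shape, VacTab.sum_shape]
    exact Pi.single_comm ..
  | succ k ih => rw [mVT_succ, ih, ← Module.End.mul_apply, ← pow_succ']

instance (k : ℕ) : Finite (VacPairs k) := inferInstanceAs (Finite {_pq : VacTab k × VacTab k // _})

lemma card_vacPairs_eq_sum_mVT (k : ℕ) :
    Nat.card (VacPairs k) = ∑ P : VacTab k, mVT k P.shape := by
  classical
  have card_fiberwise : Nat.card (VacPairs k) =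
      Nat.card (Σ P : VacTab k, {Q : VacTab k // P.shape = Q.shape}) :=
    Nat.card_congr (Equiv.subtypeProdEquivSigmaSubtype fun P Q : VacTab k ↦ P.shape = Q.shape)
  simp only [card_fiberwise, Nat.card_eq_fintype_card, Fintype.card_sigma, Fintype.card_subtype,
    mVT_eq_sum_single_shape, Pi.single_apply, card_filter, eq_comm]

theorem card_vacPairs_eq_sum_stirlingSecond (k : ℕ) :
    Nat.card (VacPairs k) = ∑ j ∈ range (2 * k + 1), (2 * k).stirlingSecond j := by
  classical
  calc Nat.card (VacPairs k)
      = ((lowerSum YoungDiagram ℕ * upperSum YoungDiagram ℕ) ^ k) (mVT k) ⊥ := by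
        rw [card_vacPairs_eq_sum_mVT, VacTab.sum_shape]
    _ = ((lowerSum YoungDiagram ℕ * upperSum YoungDiagram ℕ) ^ (2 * k)) (Pi.single ⊥ 1) ⊥ := by
        rw [mVT_eq_pow_apply_single_bot, ← Module.End.mul_apply, ← pow_add, two_mul]
    _ = ∑ j ∈ range (2 * k + 1), (2 * k).stirlingSecond j := by
        simpa using lowerSum_mul_upperSum_pow_single_bot_apply_bot (R := ℕ) (2 * k)

end VacillatingTableaux

/-- There is a bijection between set partitions of `{1, ..., 2k}` and pairs of
vacillating tableaux of the same shape and length `2k`. -/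
theorem setPartition_equiv_vacillating_pairs (k : ℕ) :
    Nonempty (Finpartition (Finset.univ : Finset (Fin (2*k))) ≃ VacPairs k) := by
  refine Finite.card_eq.1 ?_
  rw [Nat.card_eq_fintype_card, card_finpartition_eq_sum_stirlingSecond, card_univ,
    Fintype.card_fin, card_vacPairs_eq_sum_stirlingSecond]
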